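/- Let α ∈ (0, π/4) and let γ be a time optimal trajectory of (Σ)_S on [0,T] with γ(0) = (0,0,1), whose control is bang-bang with ordered switching times 0 < τ₁ < τ₂ < ... < τ_n < T (n ≥ 2), i.e. u is a.e. constant in {−1,1} on each of the intervals [0,τ₁], [τ₁,τ₂], ..., [τ_n,T] with alternating signs. Then all interior bang arcs have the same duration: for every 1 ≤ k ≤ n−1, τ_{k+1} − τ_k = v(τ₁), where v(s) = π + 2·arctan( sin s / (cos s + cot²α) ). -/

import Mathlib

open Real MeasureTheory intervalIntegral

/-- The drift vector field on the sphere: `F_S(y) = cos α·(−y₂, y₁, 0)`. -/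
noncomputable def FS (α : ℝ) (y : Fin 3 → ℝ) : Fin 3 → ℝ :=
  ![Real.cos α * (-(y 1)), Real.cos α * y 0, 0]

/-- The controlled vector field on the sphere: `G_S(y) = sin α·(0, −y₃, y₂)`. -/
noncomputable def GS (α : ℝ) (y : Fin 3 → ℝ) : Fin 3 → ℝ :=
  ![0, Real.sin α * (-(y 2)), Real.sin α * y 1]

/-- An admissible pair for `(Σ)_S` on `[a,b]`: a measurable control `u : [a,b] → [-1,1]`
together with an absolutely continuous curve `γ : [a,b] → S²` solving
`γ' = F_S(γ) + u·G_S(γ)` a.e. (expressed in integral form, componentwise). -/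
structure AdmissiblePairS (α a b : ℝ) (γ : ℝ → Fin 3 → ℝ) (u : ℝ → ℝ) : Prop where
  hab : a ≤ b
  humeas : Measurable u
  hubound : ∀ t ∈ Set.Icc a b, |u t| ≤ 1
  hsph : ∀ t ∈ Set.Icc a b, (γ t 0) ^ 2 + (γ t 1) ^ 2 + (γ t 2) ^ 2 = 1
  hcont : ContinuousOn γ (Set.Icc a b)
  hode : ∀ t ∈ Set.Icc a b, ∀ i,
    γ t i = γ a i + ∫ s in a..t, (FS α (γ s) i + u s * GS α (γ s) i)

/-- Time optimality for `(Σ)_S`. -/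
def TimeOptimalS (α a b : ℝ) (γ : ℝ → Fin 3 → ℝ) (u : ℝ → ℝ) : Prop :=
  AdmissiblePairS α a b γ u ∧
  ∀ a' b' γ' u', AdmissiblePairS α a' b' γ' u' →
    γ' a' = γ a → γ' b' = γ b → b - a ≤ b' - a'

/-- `t` is a switching time of the control `u : [a,b] → [-1,1]`. -/
def IsSwitching (a b : ℝ) (u : ℝ → ℝ) (t : ℝ) : Prop :=
  t ∈ Set.Icc a b ∧ ∀ ε > 0, ¬ ∃ c : ℝ, (c = 1 ∨ c = -1) ∧
    ∀ᵐ s ∂(volume.restrict (Set.Ioo (t - ε) (t + ε) ∩ Set.Icc a b)), u s = c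

/-- Rotation by `t` about the axis `(σ sin α, 0, cos α)`. -/
noncomputable def rot (α σ t : ℝ) (x : Fin 3 → ℝ) : Fin 3 → ℝ :=
  ![x 0 * cos t - cos α * x 1 * sin t +
      σ * sin α * (σ * sin α * x 0 + cos α * x 2) * (1 - cos t),
    x 1 * cos t + (cos α * x 0 - σ * sin α * x 2) * sin t,
    x 2 * cos t + σ * sin α * x 1 * sin t +
      cos α * (σ * sin α * x 0 + cos α * x 2) * (1 - cos t)]

/-- Euclidean dot product. -/
def dt (x y : Fin 3 → ℝ) : ℝ := x 0 * y 0 + x 1 * y 1 + x 2 * y 2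

/-- Cross product. -/
def cr (x y : Fin 3 → ℝ) : Fin 3 → ℝ :=
  ![x 1 * y 2 - x 2 * y 1, x 2 * y 0 - x 0 * y 2, x 0 * y 1 - x 1 * y 0]

/-- The bang vector field. -/
noncomputable def vf (α σ : ℝ) (x : Fin 3 → ℝ) : Fin 3 → ℝ :=
  ![-(cos α * x 1), cos α * x 0 - σ * sin α * x 2, σ * sin α * x 1]

lemma vf_eq (α σ : ℝ) (x : Fin 3 → ℝ) (i : Fin 3) :
    FS α x i + σ * GS α x i = vf α σ x i := by
  fin_cases i <;> simp [FS, GS, vf] <;> ring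

lemma rot_zero (α σ : ℝ) (x : Fin 3 → ℝ) : rot α σ 0 x = x := by
  ext i; fin_cases i <;> simp [rot]

lemma rot_dt (α σ t : ℝ) (hσ : σ ^ 2 = 1) (x y : Fin 3 → ℝ) :
    dt (rot α σ t x) (rot α σ t y) = dt x y := by
  have h1 := sin_sq_add_cos_sq t
  have h2 := sin_sq_add_cos_sq α
  simp only [rot, dt, Matrix.cons_val]
  generalize sin t = s at *
  generalize cos t = c at *
  generalize sin α = a at *
  generalize cos α = b at *
  generalize x 0 = x0
  generalize x 1 = x1
  generalize x 2 = x2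
  generalize y 0 = y0
  generalize y 1 = y1
  generalize y 2 = y2
  have h3 : (σ * a) ^ 2 + b ^ 2 = 1 := by rw [mul_pow, hσ]; linarith
  generalize σ * a = e at *
  grind

lemma rot_cr (α σ t : ℝ) (hσ : σ ^ 2 = 1) (x y : Fin 3 → ℝ) :
    cr (rot α σ t x) (rot α σ t y) = rot α σ t (cr x y) := by
  have h1 := sin_sq_add_cos_sq t
  have h2 := sin_sq_add_cos_sq α
  have h3 : (σ * sin α) ^ 2 + cos α ^ 2 = 1 := by rw [mul_pow, hσ]; linarith
  ext i
  fin_cases i <;> simp only [rot, cr, Fin.zero_eta, Fin.mk_one, Fin.reduceFinMk, Matrix.cons_val] <;>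
  · clear hσ h2
    generalize sin t = s at *
    generalize cos t = c at *
    generalize σ * sin α = e at *
    generalize cos α = b at *
    generalize x 0 = x0
    generalize x 1 = x1
    generalize x 2 = x2
    generalize y 0 = y0
    generalize y 1 = y1
    generalize y 2 = y2
    grind

lemma rot_inv (α σ t : ℝ) (hσ : σ ^ 2 = 1) (x : Fin 3 → ℝ) :
    rot α σ t (rot α σ (-t) x) = x := by
  have h1 := sin_sq_add_cos_sq t
  have h2 := sin_sq_add_cos_sq α
  have h3 : (σ * sin α) ^ 2 + cos α ^ 2 = 1 := by rw [mul_pow, hσ]; linarith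
  ext i
  fin_cases i <;> simp only [rot, Fin.zero_eta, Fin.mk_one, Fin.reduceFinMk, Matrix.cons_val, sin_neg, cos_neg] <;>
  · clear hσ h2
    generalize sin t = s at *
    generalize cos t = c at *
    generalize σ * sin α = e at *
    generalize cos α = b at *
    generalize x 0 = x0
    generalize x 1 = x1
    generalize x 2 = x2
    grind

lemma rot_sub_two_pi (α σ t : ℝ) (x : Fin 3 → ℝ) :
    rot α σ (t - 2 * π) x = rot α σ t x := by
  simp [rot]

lemma rot_deriv (α σ t : ℝ) (hσ : σ ^ 2 = 1) (x : Fin 3 → ℝ) (i : Fin 3) :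
    HasDerivAt (fun t => rot α σ t x i) (vf α σ (rot α σ t x) i) t := by
  have hs := Real.hasDerivAt_sin t
  have hc := Real.hasDerivAt_cos t
  have h2 := sin_sq_add_cos_sq α
  have h3 : (σ * sin α) ^ 2 + cos α ^ 2 = 1 := by rw [mul_pow, hσ]; linarith
  fin_cases i <;> simp only [rot, vf, Fin.zero_eta, Fin.mk_one, Fin.reduceFinMk, Matrix.cons_val]
  · refine (((hc.const_mul (x 0)).sub (hs.const_mul (cos α * x 1))).add
      ((hc.const_sub 1).const_mul (σ * sin α * (σ * sin α * x 0 + cos α * x 2)))).congr_deriv ?_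
    generalize σ * sin α = e at *
    linear_combination (x 0 * sin t) * h3
  · refine ((hc.const_mul (x 1)).add (hs.const_mul (cos α * x 0 - σ * sin α * x 2))).congr_deriv ?_
    generalize σ * sin α = e at *
    linear_combination (x 1 * sin t) * h3
  · refine (((hc.const_mul (x 2)).add (hs.const_mul (σ * sin α * x 1))).add
      ((hc.const_sub 1).const_mul (cos α * (σ * sin α * x 0 + cos α * x 2)))).congr_deriv ?_
    generalize σ * sin α = e at *
    linear_combination (x 2 * sin t) * h3

lemma vf_rot (α σ t : ℝ) (hσ : σ ^ 2 = 1) (x : Fin 3 → ℝ) :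
    vf α σ (rot α σ t x) = rot α σ t (vf α σ x) := by
  have h2 := sin_sq_add_cos_sq α
  have h3 : (σ * sin α) ^ 2 + cos α ^ 2 = 1 := by rw [mul_pow, hσ]; linarith
  ext i
  fin_cases i <;> simp only [rot, vf, Fin.zero_eta, Fin.mk_one, Fin.reduceFinMk, Matrix.cons_val] <;> ring

/-- Uniqueness for a bang arc. -/
lemma bang_unique (α σ a b : ℝ) (hab : a ≤ b) (hσ : σ ^ 2 = 1) (γ : ℝ → Fin 3 → ℝ)
    (hc : ContinuousOn γ (Set.Icc a b))
    (h : ∀ t ∈ Set.Icc a b, ∀ i, γ t i = γ a i + ∫ s in a..t, vf α σ (γ s) i) :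
    γ b = rot α σ (b - a) (γ a) := by
  have hci : ∀ i, ContinuousOn (fun s => γ s i) (Set.Icc a b) := fun i =>
    (continuous_apply i).comp_continuousOn hc
  have hvc : ∀ i, ContinuousOn (fun s => vf α σ (γ s) i) (Set.Icc a b) := by
    intro i
    have h0 := hci 0
    have h1 := hci 1
    have h2 := hci 2
    fin_cases i <;> simp only [vf, Fin.zero_eta, Fin.mk_one, Fin.reduceFinMk, Matrix.cons_val] <;> fun_prop
  have hd : ∀ t ∈ Set.Ico a b, ∀ i,
      HasDerivWithinAt (fun s => γ s i) (vf α σ (γ t) i) (Set.Ici t) t := by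
    intro t ht i
    have ht' : t ∈ Set.Icc a b := ⟨ht.1, ht.2.le⟩
    have hint : IntervalIntegrable (fun s => vf α σ (γ s) i) volume a t :=
      ((hvc i).mono (Set.Icc_subset_Icc_right ht.2.le)).intervalIntegrable_of_Icc ht.1
    have hmem : Set.Icc a b ∈ nhdsWithin t (Set.Ici t) :=
      Filter.mem_of_superset (Icc_mem_nhdsGE ht.2) (Set.Icc_subset_Icc_left ht.1)
    have hmem' : Set.Icc a b ∈ nhdsWithin t (Set.Ioi t) :=
      nhdsWithin_mono t Set.Ioi_subset_Ici_self hmem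
    have hcw : ContinuousWithinAt (fun s => vf α σ (γ s) i) (Set.Ioi t) t :=
      ((hvc i) t ht').mono_of_mem_nhdsWithin hmem'
    have hsm : StronglyMeasurableAtFilter (fun s => vf α σ (γ s) i) (nhdsWithin t (Set.Ioi t)) :=
      ⟨Set.Icc a b, hmem', (hvc i).aestronglyMeasurable measurableSet_Icc⟩
    have key := integral_hasDerivWithinAt_right hint hsm hcw (s := Set.Ici t)
    refine ((key.const_add (γ a i)).congr_of_eventuallyEq ?_ (h t ht' i))
    filter_upwards [hmem] with s hs using h s hs i
  set D : ℝ → ℝ := fun t => (γ t 0 - rot α σ (t - a) (γ a) 0) ^ 2 +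
    (γ t 1 - rot α σ (t - a) (γ a) 1) ^ 2 + (γ t 2 - rot α σ (t - a) (γ a) 2) ^ 2 with hD
  have hr : ∀ t i, HasDerivAt (fun t => rot α σ (t - a) (γ a) i)
      (vf α σ (rot α σ (t - a) (γ a)) i) t := by
    intro t i
    exact HasDerivAt.comp_sub_const t a (rot_deriv α σ (t - a) hσ (γ a) i)
  have hDc : ContinuousOn D (Set.Icc a b) := by
    have hrc : ∀ i, Continuous (fun t => rot α σ (t - a) (γ a) i) := fun i =>
      continuous_iff_continuousAt.2 fun t => (hr t i).continuousAt
    exact ((((hci 0).sub (hrc 0).continuousOn).pow 2).add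
      (((hci 1).sub (hrc 1).continuousOn).pow 2)).add
      (((hci 2).sub (hrc 2).continuousOn).pow 2)
  have hDd : ∀ t ∈ Set.Ico a b, HasDerivWithinAt D 0 (Set.Ici t) t := by
    intro t ht
    have e : ∀ i, HasDerivWithinAt (fun s => (γ s i - rot α σ (s - a) (γ a) i) ^ 2) _ (Set.Ici t) t :=
      fun i => (((hd t ht i).sub (hr t i).hasDerivWithinAt).pow 2)
    refine (((e 0).add (e 1)).add (e 2)).congr_deriv ?_
    simp only [vf, Matrix.cons_val, Pi.sub_apply]
    ring
  have hz := constant_of_has_deriv_right_zero hDc hDd b ⟨hab, le_rfl⟩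
  have hDa : D a = 0 := by simp [hD, rot_zero]
  rw [hDa] at hz
  simp only [hD] at hz
  ext i
  have q0 := sq_nonneg (γ b 0 - rot α σ (b - a) (γ a) 0)
  have q1 := sq_nonneg (γ b 1 - rot α σ (b - a) (γ a) 1)
  have q2 := sq_nonneg (γ b 2 - rot α σ (b - a) (γ a) 2)
  have : (γ b i - rot α σ (b - a) (γ a) i) ^ 2 = 0 := by
    fin_cases i <;> simp <;> nlinarith
  exact sub_eq_zero.1 (pow_eq_zero_iff (two_ne_zero) |>.1 this)

lemma adm_integrable {α a b : ℝ} {γ : ℝ → Fin 3 → ℝ} {u : ℝ → ℝ}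
    (h : AdmissiblePairS α a b γ u) (i : Fin 3) :
    IntervalIntegrable (fun s => FS α (γ s) i + u s * GS α (γ s) i) volume a b := by
  have hci : ∀ i, ContinuousOn (fun s => γ s i) (Set.Icc a b) := fun i =>
    (continuous_apply i).comp_continuousOn h.hcont
  have h0 := hci 0
  have h1 := hci 1
  have h2 := hci 2
  have hF : ContinuousOn (fun s => FS α (γ s) i) (Set.Icc a b) := by
    fin_cases i <;> simp only [FS, Fin.zero_eta, Fin.mk_one, Fin.reduceFinMk, Matrix.cons_val] <;>
      fun_prop
  have hG : ContinuousOn (fun s => GS α (γ s) i) (Set.Icc a b) := by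
    fin_cases i <;> simp only [GS, Fin.zero_eta, Fin.mk_one, Fin.reduceFinMk, Matrix.cons_val] <;>
      fun_prop
  have hu : IntervalIntegrable u volume a b := by
    rw [intervalIntegrable_iff_integrableOn_Icc_of_le h.hab]
    refine Measure.integrableOn_of_bounded (M := 1) (by simp) h.humeas.aestronglyMeasurable ?_
    exact (ae_restrict_iff' measurableSet_Icc).2 (Filter.Eventually.of_forall h.hubound)
  refine (hF.intervalIntegrable_of_Icc h.hab).add (hu.mul_continuousOn ?_)
  rwa [Set.uIcc_of_le h.hab]

/-- Extend an admissible pair by a bang arc. -/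
lemma adm_extend {α b δ c : ℝ} {γ : ℝ → Fin 3 → ℝ} {u : ℝ → ℝ}
    (h : AdmissiblePairS α 0 b γ u) (hδ : 0 ≤ δ) (hc : c ^ 2 = 1) :
    ∃ γ' u', AdmissiblePairS α 0 (b + δ) γ' u' ∧ γ' 0 = γ 0 ∧
      γ' (b + δ) = rot α c δ (γ b) := by
  have hb := h.hab
  set γ' : ℝ → Fin 3 → ℝ := fun t => if t ≤ b then γ t else rot α c (t - b) (γ b) with hγ'
  set u' : ℝ → ℝ := fun t => if t ≤ b then u t else c with hu'
  have g1 : ∀ t, t ≤ b → γ' t = γ t := fun t ht => by simp [hγ', ht]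
  have g2 : ∀ t, b ≤ t → γ' t = rot α c (t - b) (γ b) := fun t ht => by
    rcases ht.eq_or_lt with rfl | ht
    · simp [hγ', rot_zero]
    · simp [hγ', not_le.2 ht]
  have u1 : ∀ t, t ≤ b → u' t = u t := fun t ht => by simp [hu', ht]
  have u2 : ∀ t, b < t → u' t = c := fun t ht => by simp [hu', not_le.2 ht]
  have habs : |c| ≤ 1 := by
    rw [← sq_le_sq₀ (abs_nonneg c) zero_le_one, sq_abs, hc, one_pow]
  have hr : ∀ t i, HasDerivAt (fun t => rot α c (t - b) (γ b) i)
      (vf α c (rot α c (t - b) (γ b)) i) t := by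
    intro t i
    exact HasDerivAt.comp_sub_const t b (rot_deriv α c (t - b) hc (γ b) i)
  have hrc : Continuous (fun t => rot α c (t - b) (γ b)) :=
    continuous_pi fun i => continuous_iff_continuousAt.2 fun t => (hr t i).continuousAt
  have hvc : ∀ i, Continuous (fun s => vf α c (rot α c (s - b) (γ b)) i) := by
    intro i
    have h0 := (continuous_apply (0 : Fin 3)).comp hrc
    have h1 := (continuous_apply (1 : Fin 3)).comp hrc
    have h2 := (continuous_apply (2 : Fin 3)).comp hrc
    simp only [Function.comp_def] at h0 h1 h2
    fin_cases i <;>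
      simp only [vf, Fin.zero_eta, Fin.mk_one, Fin.reduceFinMk, Matrix.cons_val]
    · exact (h1.const_mul _).neg
    · exact (h0.const_mul _).sub (h2.const_mul _)
    · exact h1.const_mul _
  refine ⟨γ', u', ⟨by linarith, ?_, ?_, ?_, ?_, ?_⟩, g1 0 hb, ?_⟩
  · exact Measurable.ite measurableSet_Iic h.humeas measurable_const
  · intro t ht
    rcases le_or_gt t b with h1 | h1
    · rw [u1 t h1]; exact h.hubound t ⟨ht.1, h1⟩
    · rw [u2 t h1]; exact habs
  · intro t ht
    rcases le_or_gt t b with h1 | h1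
    · rw [g1 t h1]; exact h.hsph t ⟨ht.1, h1⟩
    · rw [g2 t h1.le]
      have := rot_dt α c (t - b) hc (γ b) (γ b)
      have h2 := h.hsph b ⟨hb, le_rfl⟩
      simp only [dt] at this
      linarith
  · have e : Set.Icc 0 (b + δ) = Set.Icc 0 b ∪ Set.Icc b (b + δ) :=
      (Set.Icc_union_Icc_eq_Icc hb (by linarith)).symm
    rw [e]
    refine ContinuousOn.union_of_isClosed ?_ ?_ isClosed_Icc isClosed_Icc
    · exact h.hcont.congr fun t ht => g1 t ht.2
    · exact hrc.continuousOn.congr fun t ht => g2 t ht.1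
  · have first : ∀ t ∈ Set.Icc 0 b, ∀ i, ∫ s in (0 : ℝ)..t, (FS α (γ' s) i + u' s * GS α (γ' s) i)
        = ∫ s in (0 : ℝ)..t, (FS α (γ s) i + u s * GS α (γ s) i) := by
      intro t ht i
      refine integral_congr fun s hs => ?_
      rw [Set.uIcc_of_le ht.1] at hs
      have : s ≤ b := hs.2.trans ht.2
      simp only [g1 s this, u1 s this]
    intro t ht i
    rcases le_or_gt t b with h1 | h1
    · rw [g1 t h1, g1 0 hb, first t ⟨ht.1, h1⟩]
      exact h.hode t ⟨ht.1, h1⟩ i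
    · have i1 : IntervalIntegrable (fun s => FS α (γ' s) i + u' s * GS α (γ' s) i) volume 0 b := by
        refine (adm_integrable h i).congr fun s hs => ?_
        rw [Set.uIoc_of_le hb] at hs
        simp only [g1 s hs.2, u1 s hs.2]
      have e2 : Set.EqOn (fun s => vf α c (rot α c (s - b) (γ b)) i)
          (fun s => FS α (γ' s) i + u' s * GS α (γ' s) i) (Set.uIoc b t) := by
        intro s hs
        rw [Set.uIoc_of_le h1.le] at hs
        simp only [g2 s hs.1.le, u2 s hs.1, vf_eq]
      have i2 : IntervalIntegrable (fun s => FS α (γ' s) i + u' s * GS α (γ' s) i) volume b t :=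
        ((hvc i).intervalIntegrable b t).congr e2
      rw [← integral_add_adjacent_intervals i1 i2, first b ⟨hb, le_rfl⟩, g1 0 hb, ← add_assoc,
        ← h.hode b ⟨hb, le_rfl⟩ i, g2 t h1.le]
      have e3 : ∫ s in b..t, (FS α (γ' s) i + u' s * GS α (γ' s) i)
          = ∫ s in b..t, vf α c (rot α c (s - b) (γ b)) i :=
        integral_congr_ae (Filter.Eventually.of_forall fun s hs => (e2 hs).symm)
      rw [e3, integral_eq_sub_of_hasDerivAt (fun s _ => hr s i) ((hvc i).intervalIntegrable b t)]
      simp [rot_zero]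
  · rw [g2 _ (by linarith)]; simp

/-- Concatenation of `m` bang arcs with durations `d`, alternating signs. -/
noncomputable def fl (α ε : ℝ) (d : ℕ → ℝ) (x : Fin 3 → ℝ) : ℕ → Fin 3 → ℝ
  | 0 => x
  | m + 1 => rot α ((-1) ^ m * ε) (d m) (fl α ε d x m)

lemma sg_sq {ε : ℝ} (hε : ε = 1 ∨ ε = -1) (m : ℕ) : ((-1 : ℝ) ^ m * ε) ^ 2 = 1 := by
  rw [mul_pow, ← pow_mul, mul_comm m 2, pow_mul]
  rcases hε with rfl | rfl <;> simp

lemma adm_fl {α ε : ℝ} (hε : ε = 1 ∨ ε = -1) (d : ℕ → ℝ) (x : Fin 3 → ℝ)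
    (hx : x 0 ^ 2 + x 1 ^ 2 + x 2 ^ 2 = 1) (m : ℕ) (hd : ∀ j < m, 0 ≤ d j) :
    ∃ γ u, AdmissiblePairS α 0 (∑ j ∈ Finset.range m, d j) γ u ∧ γ 0 = x ∧
      γ (∑ j ∈ Finset.range m, d j) = fl α ε d x m := by
  induction m with
  | zero =>
    refine ⟨fun _ => x, fun _ => 0, ⟨by simp, measurable_const, by simp, by simpa using hx,
      continuousOn_const, ?_⟩, rfl, rfl⟩
    intro t ht i
    have : t = 0 := by simpa using ht
    simp [this]
  | succ m ih =>
    obtain ⟨γ, u, h, h0, h1⟩ := ih fun j hj => hd j (by omega)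
    obtain ⟨γ', u', h', h0', h1'⟩ := adm_extend h (hd m (by omega)) (sg_sq hε m)
    refine ⟨γ', u', ?_, h0'.trans h0, ?_⟩
    · rwa [Finset.sum_range_succ]
    · rw [Finset.sum_range_succ, h1', h1, fl]

lemma fl_dt {α ε : ℝ} (hε : ε = 1 ∨ ε = -1) (d : ℕ → ℝ) (x y : Fin 3 → ℝ) (m : ℕ) :
    dt (fl α ε d x m) (fl α ε d y m) = dt x y := by
  induction m with
  | zero => rfl
  | succ m ih => rw [fl, fl, rot_dt _ _ _ (sg_sq hε m), ih]

lemma fl_cr {α ε : ℝ} (hε : ε = 1 ∨ ε = -1) (d : ℕ → ℝ) (x y : Fin 3 → ℝ) (m : ℕ) :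
    cr (fl α ε d x m) (fl α ε d y m) = fl α ε d (cr x y) m := by
  induction m with
  | zero => rfl
  | succ m ih => rw [fl, fl, rot_cr _ _ _ (sg_sq hε m), ih, fl]

lemma fl_surj {α ε : ℝ} (hε : ε = 1 ∨ ε = -1) (d : ℕ → ℝ) (m : ℕ) (y : Fin 3 → ℝ) :
    ∃ x, fl α ε d x m = y := by
  induction m generalizing y with
  | zero => exact ⟨y, rfl⟩
  | succ m ih =>
    obtain ⟨x, hx⟩ := ih (rot α ((-1) ^ m * ε) (-(d m)) y)
    exact ⟨x, by rw [fl, hx, rot_inv _ _ _ (sg_sq hε m)]⟩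

lemma fl_congr {α ε : ℝ} {d d' : ℕ → ℝ} (x : Fin 3 → ℝ) (m : ℕ) (h : ∀ j < m, d j = d' j) :
    fl α ε d x m = fl α ε d' x m := by
  induction m with
  | zero => rfl
  | succ m ih => rw [fl, fl, ih fun j hj => h j (by omega), h m (by omega)]

/-- Effect of changing one duration, paired with a transported covector. -/
lemma fl_update {α ε : ℝ} (hε : ε = 1 ∨ ε = -1) (d : ℕ → ℝ) (x p : Fin 3 → ℝ) (j : ℕ) (s : ℝ)
    (m : ℕ) (hm : j < m) :
    dt (fl α ε d p m) (fl α ε (Function.update d j s) x m) =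
      dt (fl α ε d p (j + 1)) (rot α ((-1) ^ j * ε) s (fl α ε d x j)) := by
  induction m with
  | zero => omega
  | succ m ih =>
    rcases Nat.lt_succ_iff_lt_or_eq.1 hm with h | rfl
    · rw [← ih h]
      conv_lhs => rw [fl, fl]
      rw [Function.update_of_ne (by omega), rot_dt _ _ _ (sg_sq hε m)]
    · conv_lhs => rw [fl.eq_2 _ _ (Function.update d j s)]
      rw [Function.update_self, fl_congr x j (d := Function.update d j s) (d' := d)]
      intro i hi
      exact Function.update_of_ne (by omega) _ _

/-- A time optimal bang-bang trajectory is the concatenation of rotations. -/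
lemma traj_eq {α T : ℝ} {γ : ℝ → Fin 3 → ℝ} {u : ℝ → ℝ} (h : AdmissiblePairS α 0 T γ u)
    {n : ℕ} {τ : ℕ → ℝ} (hτ0 : τ 0 = 0) (hτlast : τ (n + 1) = T)
    (hmono : ∀ k ≤ n, τ k < τ (k + 1)) {ε : ℝ} (hε : ε = 1 ∨ ε = -1)
    (hbang : ∀ k ≤ n,
      ∀ᵐ t ∂(volume.restrict (Set.Icc (τ k) (τ (k + 1)))), u t = (-1 : ℝ) ^ k * ε)
    (m : ℕ) (hm : m ≤ n + 1) :
    γ (τ m) = fl α ε (fun j => τ (j + 1) - τ j) (γ 0) m := by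
  have hmon : ∀ a b, a ≤ b → b ≤ n + 1 → τ a ≤ τ b := by
    intro a b hab
    induction b, hab using Nat.le_induction with
    | base => intro _; exact le_rfl
    | succ b hb ih => intro h; exact (ih (by omega)).trans (hmono b (by omega)).le
  induction m with
  | zero => rw [hτ0]; rfl
  | succ m ih =>
    have ih := ih (by omega)
    rw [fl, ← ih]
    have hlt := hmono m (by omega)
    have h0m : 0 ≤ τ m := by rw [← hτ0]; exact hmon 0 m (by omega) (by omega)
    have hmT : τ (m + 1) ≤ T := by rw [← hτlast]; exact hmon _ _ (by omega) le_rfl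
    refine bang_unique α _ _ _ hlt.le (sg_sq hε m) γ
      (h.hcont.mono (Set.Icc_subset_Icc h0m hmT)) ?_
    intro t ht i
    have hi := adm_integrable h i
    have i1 := hi.mono_set (c := 0) (d := τ m) (by
      rw [Set.uIcc_of_le h0m, Set.uIcc_of_le h.hab]
      exact Set.Icc_subset_Icc_right (by linarith))
    have i2 := hi.mono_set (c := τ m) (d := t) (by
      rw [Set.uIcc_of_le ht.1, Set.uIcc_of_le h.hab]
      exact Set.Icc_subset_Icc h0m (ht.2.trans hmT))
    rw [h.hode t ⟨h0m.trans ht.1, ht.2.trans hmT⟩ i, h.hode (τ m) ⟨h0m, by linarith⟩ i,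
      ← integral_add_adjacent_intervals i1 i2, add_assoc]
    congr 2
    refine integral_congr_ae ?_
    have hb := (ae_restrict_iff' measurableSet_Icc).1 (hbang m (by omega))
    filter_upwards [hb] with s hs hst
    rw [Set.uIoc_of_le ht.1] at hst
    rw [hs ⟨hst.1.le, hst.2.trans ht.2⟩, vf_eq]

/-- Extend a finite tuple of durations by zero. -/
noncomputable def xt (n : ℕ) (y : Fin (n + 1) → ℝ) : ℕ → ℝ :=
  fun j => if h : j < n + 1 then y ⟨j, h⟩ else 0

lemma xt_contDiff (n j : ℕ) : ContDiff ℝ 1 (fun y => xt n y j) := by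
  unfold xt
  split_ifs with h
  · exact contDiff_apply ℝ ℝ _
  · exact contDiff_const

lemma fl_contDiff (α ε : ℝ) (n m : ℕ) (x : Fin 3 → ℝ) :
    ContDiff ℝ 1 (fun y => fl α ε (xt n y) x m) := by
  induction m with
  | zero => exact contDiff_const
  | succ m ih =>
    have hx := xt_contDiff n m
    have h : ∀ i, ContDiff ℝ 1 (fun y => fl α ε (xt n y) x m i) := fun i => contDiff_pi.1 ih i
    have h0 := h 0
    have h1 := h 1
    have h2 := h 2
    have hs := Real.contDiff_sin.comp hx
    have hc := Real.contDiff_cos.comp hx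
    simp only [Function.comp_def] at hs hc
    rw [contDiff_pi]
    intro i
    fin_cases i <;>
      simp only [fl, rot, Fin.zero_eta, Fin.mk_one, Fin.reduceFinMk, Matrix.cons_val] <;> fun_prop

lemma dual_eq (Λ : Module.Dual ℝ (Fin 3 → ℝ)) (y : Fin 3 → ℝ) :
    Λ y = dt (fun i => Λ (Pi.single i 1)) y := by
  have : y = y 0 • Pi.single 0 1 + y 1 • Pi.single 1 1 + y 2 • Pi.single 2 1 := by
    ext i; fin_cases i <;> simp
  conv_lhs => rw [this]
  simp only [map_add, map_smul, smul_eq_mul, dt]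
  ring

lemma multiplier {α ε : ℝ} (hε : ε = 1 ∨ ε = -1) (n : ℕ) (d : ℕ → ℝ)
    (hd : ∀ j ≤ n, 0 < d j) (x : Fin 3 → ℝ) (hx : dt x x = 1)
    (hmin : ∀ d' : ℕ → ℝ, (∀ j < n + 1, 0 ≤ d' j) →
      fl α ε d' x (n + 1) = fl α ε d x (n + 1) →
      ∑ j ∈ Finset.range (n + 1), d j ≤ ∑ j ∈ Finset.range (n + 1), d' j) :
    ∃ p, p ≠ 0 ∧ dt x p = 0 ∧ ∃ l : ℝ, ∀ j ≤ n,
      dt (fl α ε d p (j + 1)) (vf α ((-1) ^ j * ε) (fl α ε d x (j + 1))) = l := by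
  set f : (Fin (n + 1) → ℝ) × ℝ → Fin 3 → ℝ :=
    fun z => z.2 • fl α ε (xt n z.1) x (n + 1) with hf
  set φ : (Fin (n + 1) → ℝ) × ℝ → ℝ := fun z => ∑ i, z.1 i with hφ
  set z₀ : (Fin (n + 1) → ℝ) × ℝ := (fun i => d i, 1) with hz
  have hfc : ContDiff ℝ 1 f := contDiff_snd.smul ((fl_contDiff α ε n (n + 1) x).comp contDiff_fst)
  have hφc : ContDiff ℝ 1 φ := by
    refine ContDiff.sum fun i _ => ?_
    exact (contDiff_apply ℝ ℝ i).comp contDiff_fst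
  have hf' := hfc.contDiffAt.hasStrictFDerivAt (x := z₀) one_ne_zero
  have hφ' := hφc.contDiffAt.hasStrictFDerivAt (x := z₀) one_ne_zero
  have hxt0 : fl α ε (xt n z₀.1) x (n + 1) = fl α ε d x (n + 1) :=
    fl_congr x _ fun j hj => by simp [xt, hj, hz]
  have hfz : f z₀ = fl α ε d x (n + 1) := by
    simp only [hf, hxt0]; simp [hz]
  have hsum : ∀ y : Fin (n + 1) → ℝ, ∑ i, y i = ∑ j ∈ Finset.range (n + 1), xt n y j := by
    intro y
    rw [Finset.sum_range]
    exact Finset.sum_congr rfl fun i _ => by simp only [xt, i.2, dif_pos]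
  have hext : IsLocalExtrOn φ {z | f z = f z₀} z₀ := by
    left
    have hpos : ∀ᶠ z in nhds z₀, (∀ i, 0 < z.1 i) ∧ 0 < z.2 := by
      refine Filter.Eventually.and ?_ ?_
      · rw [Filter.eventually_all]
        intro i
        have : ContinuousAt (fun z : (Fin (n + 1) → ℝ) × ℝ => z.1 i) z₀ := by fun_prop
        exact this.eventually_const_lt (hd i (by omega))
      · exact continuousAt_snd.eventually_const_lt (by simp [hz])
    show ∀ᶠ z in nhdsWithin z₀ {z | f z = f z₀}, φ z₀ ≤ φ z
    filter_upwards [nhdsWithin_le_nhds hpos, self_mem_nhdsWithin] with z hz1 hz2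
    have hz2 : z.2 • fl α ε (xt n z.1) x (n + 1) = fl α ε d x (n + 1) := by
      rw [← hfz]; exact hz2
    have hn1 := fl_dt (α := α) hε (xt n z.1) x x (n + 1)
    have hn2 := fl_dt (α := α) hε d x x (n + 1)
    have hz3 : z.2 ^ 2 = 1 := by
      rw [← hz2] at hn2
      rw [hx] at hn1 hn2
      simp only [dt, Pi.smul_apply, smul_eq_mul] at hn1 hn2
      linear_combination hn2 - z.2 ^ 2 * hn1
    have hz4 : z.2 = 1 := by nlinarith [hz1.2]
    rw [hz4, one_smul] at hz2
    have := hmin (xt n z.1) (fun j hj => by simp only [xt, hj, dif_pos]; exact (hz1.1 _).le) hz2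
    simp only [hφ, hsum]
    refine le_trans (le_of_eq ?_) this
    exact Finset.sum_congr rfl fun j hj => by
      have := Finset.mem_range.1 hj
      simp [xt, this, hz]
  obtain ⟨Λ, Λ₀, hne, hΛ⟩ := hext.exists_linear_map_of_hasStrictFDerivAt hf' hφ'
  set P : Fin 3 → ℝ := fun i => Λ (Pi.single i 1) with hP
  have hΛP : ∀ y, Λ y = dt P y := dual_eq Λ
  obtain ⟨p, hp⟩ := fl_surj (α := α) hε d (n + 1) P
  -- derivative along lines
  have hline : ∀ v w : (Fin (n + 1) → ℝ) × ℝ, ∀ c : ℝ,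
      HasDerivAt (fun s : ℝ => dt P (f (z₀ + s • v))) c 0 → Λ (fderiv ℝ f z₀ v) = c := by
    intro v _ c hc
    have h1 : HasDerivAt (fun s : ℝ => z₀ + s • v) v 0 := by
      simpa using ((hasDerivAt_id (0 : ℝ)).smul_const v).const_add z₀
    have h2 : HasFDerivAt f (fderiv ℝ f z₀) (z₀ + (0 : ℝ) • v) := by
      simpa using hf'.hasFDerivAt
    have h3 := h2.comp_hasDerivAt (0 : ℝ) h1
    have h4 := (LinearMap.toContinuousLinearMap Λ).hasFDerivAt.comp_hasDerivAt (0 : ℝ) h3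
    have h5 : (fun s : ℝ => dt P (f (z₀ + s • v))) =
        (LinearMap.toContinuousLinearMap Λ) ∘ (f ∘ fun s : ℝ => z₀ + s • v) := by
      ext s; simp [← hΛP]
    rw [h5] at hc
    exact h4.unique hc
  have hj : ∀ j ≤ n, dt (fl α ε d p (j + 1)) (vf α ((-1) ^ j * ε) (fl α ε d x (j + 1))) = -Λ₀ := by
    intro j hjn
    have hjlt : j < n + 1 := by omega
    set v : (Fin (n + 1) → ℝ) × ℝ := (Pi.single ⟨j, hjlt⟩ 1, 0) with hv
    have e1 : ∀ s : ℝ, dt P (f (z₀ + s • v)) =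
        dt (fl α ε d p (j + 1)) (rot α ((-1) ^ j * ε) (d j + s) (fl α ε d x j)) := by
      intro s
      rw [← fl_update hε d x p j (d j + s) (n + 1) hjlt, hp]
      congr 1
      have : (z₀ + s • v).2 = 1 := by simp [hv, hz]
      simp only [hf, this, one_smul]
      refine fl_congr x _ fun i hi => ?_
      by_cases hij : i = j
      · subst hij
        simp [xt, hi, hz, hv]
      · rw [Function.update_of_ne hij]
        have : (⟨i, hi⟩ : Fin (n + 1)) ≠ ⟨j, hjlt⟩ := by simpa using hij
        simp [xt, hi, hz, hv, this]
    have e2 : HasDerivAt (fun s : ℝ => dt P (f (z₀ + s • v)))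
        (dt (fl α ε d p (j + 1)) (vf α ((-1) ^ j * ε) (fl α ε d x (j + 1)))) 0 := by
      simp only [e1]
      have hr : ∀ i, HasDerivAt (fun s => rot α ((-1) ^ j * ε) (d j + s) (fl α ε d x j) i)
          (vf α ((-1) ^ j * ε) (fl α ε d x (j + 1)) i) 0 := by
        intro i
        have h := rot_deriv α ((-1) ^ j * ε) (d j + 0) (sg_sq hε j) (fl α ε d x j) i
        have h' := HasDerivAt.comp_const_add (d j) 0 h
        simpa [fl] using h'
      simp only [dt]
      exact (((hr 0).const_mul _).add ((hr 1).const_mul _)).add ((hr 2).const_mul _)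
    have e3 := hline v v _ e2
    have e4 : fderiv ℝ φ z₀ v = 1 := by
      have h1 : HasDerivAt (fun s : ℝ => z₀ + s • v) v 0 := by
        simpa using ((hasDerivAt_id (0 : ℝ)).smul_const v).const_add z₀
      have h2 : HasFDerivAt φ (fderiv ℝ φ z₀) (z₀ + (0 : ℝ) • v) := by
        simpa using hφ'.hasFDerivAt
      have h3 := h2.comp_hasDerivAt (0 : ℝ) h1
      have h5 : (φ ∘ fun s : ℝ => z₀ + s • v) = fun s => φ z₀ + s := by
        ext s
        simp only [hφ, Function.comp, Prod.fst_add, Prod.smul_fst, Pi.add_apply, Pi.smul_apply, hv,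
          Finset.sum_add_distrib, ← Finset.smul_sum]
        simp
      rw [h5] at h3
      exact h3.unique ((hasDerivAt_id (0 : ℝ)).const_add _)
    have e5 := hΛ v
    rw [e3, e4] at e5
    simp only [smul_eq_mul, mul_one] at e5
    linarith
  refine ⟨p, ?_, ?_, -Λ₀, hj⟩
  · rintro rfl
    have hz0 : ∀ m, fl α ε d 0 m = 0 := by
      intro m
      induction m with
      | zero => rfl
      | succ m ih => rw [fl, ih]; ext i; fin_cases i <;> simp [rot]
    have hP0 : P = 0 := by rw [← hp, hz0]
    apply hne
    have h1 : Λ = 0 := by ext y; simp [hΛP, hP0, dt]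
    have h2 := hj 0 (Nat.zero_le _)
    rw [hz0] at h2
    simp only [dt, Pi.zero_apply, zero_mul, add_zero] at h2
    rw [h1, show Λ₀ = 0 by linarith]
    rfl
  · have e2 : HasDerivAt (fun s : ℝ => dt P (f (z₀ + s • ((0, 1) : (Fin (n + 1) → ℝ) × ℝ))))
        (dt P (fl α ε d x (n + 1))) 0 := by
      have : ∀ s : ℝ, dt P (f (z₀ + s • ((0, 1) : (Fin (n + 1) → ℝ) × ℝ))) =
          (1 + s) * dt P (fl α ε d x (n + 1)) := by
        intro s
        have h1 : (z₀ + s • ((0, 1) : (Fin (n + 1) → ℝ) × ℝ)).1 = z₀.1 := by simp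
        have h2 : (z₀ + s • ((0, 1) : (Fin (n + 1) → ℝ) × ℝ)).2 = 1 + s := by simp [hz]
        simp only [hf, h1, h2, hxt0, dt, Pi.smul_apply, smul_eq_mul]
        ring
      simp only [this]
      simpa using ((hasDerivAt_id (0 : ℝ)).const_add 1).mul_const (dt P (fl α ε d x (n + 1)))
    have e3 := hline _ 0 _ e2
    have e4 : fderiv ℝ φ z₀ ((0, 1) : (Fin (n + 1) → ℝ) × ℝ) = 0 := by
      have h1 : HasDerivAt (fun s : ℝ => z₀ + s • ((0, 1) : (Fin (n + 1) → ℝ) × ℝ)) (0, 1) 0 := by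
        simpa using ((hasDerivAt_id (0 : ℝ)).smul_const
          ((0, 1) : (Fin (n + 1) → ℝ) × ℝ)).const_add z₀
      have h2 : HasFDerivAt φ (fderiv ℝ φ z₀)
          (z₀ + (0 : ℝ) • ((0, 1) : (Fin (n + 1) → ℝ) × ℝ)) := by
        simpa using hφ'.hasFDerivAt
      have h3 := h2.comp_hasDerivAt (0 : ℝ) h1
      have h5 : (φ ∘ fun s : ℝ => z₀ + s • ((0, 1) : (Fin (n + 1) → ℝ) × ℝ)) = fun s => φ z₀ := by
        ext s
        simp [hφ]
      rw [h5] at h3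
      exact h3.unique (hasDerivAt_const _ _)
    have e5 := hΛ (0, 1)
    rw [e3, e4, ← hp, fl_dt hε] at e5
    simp only [smul_eq_mul, mul_zero, add_zero] at e5
    rw [← e5]
    simp only [dt]; ring

lemma arc {α σ d : ℝ} (hσ : σ ^ 2 = 1) (hc : cos α ≠ 0) (hd0 : 0 < d) (hd1 : d < 2 * π)
    (m : Fin 3 → ℝ) (h0 : m 0 = 0) (h1 : rot α σ d m 0 = 0) :
    m 1 * cos (d / 2) = σ * m 2 * sin α * sin (d / 2) ∧ rot α σ d m 1 = -m 1 ∧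
      rot α σ d m 2 = m 2 := by
  obtain ⟨e, rfl⟩ : ∃ e, d = 2 * e := ⟨d / 2, by ring⟩
  have hs : sin e ≠ 0 := (sin_pos_of_pos_of_lt_pi (by linarith) (by linarith)).ne'
  rw [show 2 * e / 2 = e by ring]
  have hsc := sin_sq_add_cos_sq e
  have ha := sin_sq_add_cos_sq α
  simp only [rot, Matrix.cons_val, h0, sin_two_mul, cos_two_mul] at h1 ⊢
  have key : m 1 * cos e = σ * m 2 * sin α * sin e := by
    have : (2 * cos α * sin e) * (m 1 * cos e - σ * m 2 * sin α * sin e) = 0 := by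
      linear_combination -h1 - (2 * σ * sin α * cos α * m 2) * hsc
    have h2 : 2 * cos α * sin e ≠ 0 := by positivity
    exact sub_eq_zero.1 ((mul_eq_zero.1 this).resolve_left h2)
  refine ⟨key, ?_, ?_⟩
  · linear_combination (2 * cos e) * key
  · linear_combination (2 * sin e * σ * sin α) * key + (2 * sin e ^ 2 * m 2 * sin α ^ 2) * hσ +
      (2 * m 2 * sin e ^ 2) * ha + (2 * m 2 - 2 * m 2 * cos α ^ 2) * hsc

lemma dur {d q : ℝ} (hd0 : 0 < d) (hd1 : d < 2 * π) (h : cos (d / 2) = -q * sin (d / 2)) :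
    d = π + 2 * arctan q := by
  have hs : 0 < sin (d / 2) := sin_pos_of_pos_of_lt_pi (by linarith) (by linarith)
  have ht : tan (d / 2 - π / 2) = q := by
    rw [tan_eq_sin_div_cos, sin_sub_pi_div_two, cos_sub_pi_div_two, h]
    field_simp
  rw [← ht, arctan_tan (by linarith) (by linarith)]
  ring

/-- For a bang-bang time optimal trajectory of `(Σ)_S` starting at the north pole, with
switching times `0 < τ₁ < ... < τ_n < T` (`n ≥ 2`) and alternating bang controls, all
interior bang arcs have duration `v(τ₁) = π + 2·arctan(sin τ₁/(cos τ₁ + cot²α))`. -/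
theorem interior_bang_durations_eq (α T : ℝ) (γ : ℝ → Fin 3 → ℝ) (u : ℝ → ℝ)
    (hα : α ∈ Set.Ioo 0 (π / 4)) (hopt : TimeOptimalS α 0 T γ u)
    (h0 : γ 0 = ![0, 0, 1])
    (n : ℕ) (hn : 2 ≤ n) (τ : ℕ → ℝ) (hτ0 : τ 0 = 0) (hτlast : τ (n + 1) = T)
    (hmono : ∀ k ≤ n, τ k < τ (k + 1))
    (ε₀ : ℝ) (hε₀ : ε₀ = 1 ∨ ε₀ = -1)
    (hbang : ∀ k ≤ n,
      ∀ᵐ t ∂(volume.restrict (Set.Icc (τ k) (τ (k + 1)))), u t = (-1 : ℝ) ^ k * ε₀) :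
    ∀ k, 1 ≤ k → k ≤ n - 1 → τ (k + 1) - τ k =
      π + 2 * Real.arctan (Real.sin (τ 1) /
        (Real.cos (τ 1) + (Real.cos α / Real.sin α) ^ 2)) := by
  obtain ⟨hadm, hbest⟩ := hopt
  have hs : 0 < sin α := sin_pos_of_pos_of_lt_pi hα.1 (by linarith [hα.2, pi_pos])
  have hcs : sin α < cos α := by
    rw [← cos_pi_div_two_sub]
    exact cos_lt_cos_of_nonneg_of_le_pi_div_two hα.1.le (by linarith [hα.1]) (by linarith [hα.2])
  have hc : 0 < cos α := hs.trans hcs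
  set d : ℕ → ℝ := fun j => τ (j + 1) - τ j with hd
  set e : Fin 3 → ℝ := ![0, 0, 1] with he
  have hdpos : ∀ j ≤ n, 0 < d j := fun j hj => sub_pos.2 (hmono j hj)
  have hsumd : ∑ j ∈ Finset.range (n + 1), d j = T := by
    rw [Finset.sum_range_sub, hτ0, hτlast, sub_zero]
  have hend : γ T = fl α ε₀ d e (n + 1) := by
    rw [← hτlast, traj_eq hadm hτ0 hτlast hmono hε₀ hbang (n + 1) le_rfl, h0]
  have hmin : ∀ d' : ℕ → ℝ, (∀ j < n + 1, 0 ≤ d' j) →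
      fl α ε₀ d' e (n + 1) = fl α ε₀ d e (n + 1) →
      ∑ j ∈ Finset.range (n + 1), d j ≤ ∑ j ∈ Finset.range (n + 1), d' j := by
    intro d' hd' hfl
    obtain ⟨γ', u', h, hs0, hs1⟩ := adm_fl (α := α) hε₀ d' e (by simp [he]) (n + 1) hd'
    have := hbest _ _ γ' u' h (by rw [hs0, h0]) (by rw [hs1, hfl, hend])
    rw [hsumd]; linarith
  have hd2 : ∀ j ≤ n, d j < 2 * π := by
    intro j hj
    by_contra hcon
    push Not at hcon
    have hfl : ∀ m, fl α ε₀ (Function.update d j (d j - 2 * π)) e m = fl α ε₀ d e m := by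
      intro m
      induction m with
      | zero => rfl
      | succ m ih =>
        rw [fl, fl, ih]
        by_cases hmj : m = j
        · subst hmj
          rw [Function.update_self, rot_sub_two_pi]
        · rw [Function.update_of_ne hmj]
    have := hmin (Function.update d j (d j - 2 * π)) (by
      intro i hi
      by_cases hij : i = j
      · subst hij; rw [Function.update_self]; linarith
      · rw [Function.update_of_ne hij]; exact (hdpos i (by omega)).le) (hfl _)
    rw [Finset.sum_update_of_mem (Finset.mem_range.2 (by omega)),
      ← Finset.add_sum_erase _ _ (Finset.mem_range.2 (show j < n + 1 by omega)),
      Finset.sdiff_singleton_eq_erase] at this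
    linarith [pi_pos]
  obtain ⟨p, hp0, hpe, l, hl⟩ := multiplier (α := α) hε₀ n d hdpos e (by simp [dt, he]) hmin
  set M : ℕ → Fin 3 → ℝ := fl α ε₀ d (cr e p) with hM
  have hMcr : ∀ j, M j = cr (fl α ε₀ d e j) (fl α ε₀ d p j) := fun j => (fl_cr hε₀ d e p j).symm
  have hM0 : ∀ j, j + 1 ≤ n → M (j + 1) 0 = 0 := by
    intro j hj
    have a1 := hl j (by omega)
    have a2 := hl (j + 1) hj
    rw [fl, fl.eq_2 _ _ d e, vf_rot _ _ _ (sg_sq hε₀ _), rot_dt _ _ _ (sg_sq hε₀ _)] at a2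
    rw [hMcr]
    simp only [dt, vf, cr, Matrix.cons_val, pow_succ] at a1 a2 ⊢
    have h2 := sg_sq hε₀ j
    have h3 : (-1 : ℝ) ^ j * ε₀ ≠ 0 := by
      intro h; rw [h] at h2; norm_num at h2
    generalize (-1 : ℝ) ^ j = s at *
    have h4 : (2 * (s * ε₀) * sin α) * (fl α ε₀ d e (j + 1) 1 * fl α ε₀ d p (j + 1) 2 -
        fl α ε₀ d e (j + 1) 2 * fl α ε₀ d p (j + 1) 1) = 0 := by
      linear_combination a1 - a2
    exact (mul_eq_zero.1 h4).resolve_left (by positivity)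
  set b := M 1 1 with hb
  set h := M 1 2 with hh
  have hM10 : M 1 0 = 0 := hM0 0 (by omega)
  have hMk : ∀ j, j + 1 ≤ n → M (j + 1) 1 = (-1) ^ j * b ∧ M (j + 1) 2 = h := by
    intro j
    induction j with
    | zero => intro _; simp [hb, hh]
    | succ j ih =>
      intro hj
      obtain ⟨i1, i2⟩ := ih (by omega)
      have a := arc (sg_sq hε₀ (j + 1)) hc.ne' (hdpos (j + 1) (by omega)) (hd2 (j + 1) (by omega))
        (M (j + 1)) (hM0 j (by omega)) (hM0 (j + 1) hj)
      refine ⟨a.2.1.trans ?_, a.2.2.trans i2⟩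
      rw [i1]; ring
  -- orthogonality at the first switching
  have hden : 0 < cos α ^ 2 + sin α ^ 2 * cos (τ 1) := by
    nlinarith [neg_one_le_cos (τ 1), sq_nonneg (sin α), mul_pos hs hc]
  have hε2 : ε₀ ^ 2 = 1 := by rcases hε₀ with rfl | rfl <;> norm_num
  have hrel : h * (cos α ^ 2 + sin α ^ 2 * cos (τ 1)) = ε₀ * b * sin α * sin (τ 1) := by
    have a := fl_dt (α := α) hε₀ d e (cr e p) 1
    have a0 : dt e (cr e p) = 0 := by simp [dt, cr, he]
    rw [a0] at a
    change dt (rot α ((-1) ^ 0 * ε₀) (d 0) e) (M 1) = 0 at a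
    have hd0 : d 0 = τ 1 := by simp [hd, hτ0]
    rw [hd0] at a
    simp only [dt, rot, hM10, Matrix.cons_val, he, pow_zero, one_mul, ← hb, ← hh] at a
    linear_combination a + h * cos (τ 1) * sin_sq_add_cos_sq α
  have hb0 : b ≠ 0 := by
    intro hb0
    rw [hb0] at hrel
    have hh0 : h = 0 := by
      have : h * (cos α ^ 2 + sin α ^ 2 * cos (τ 1)) = 0 := by rw [hrel]; ring
      exact (mul_eq_zero.1 this).resolve_right hden.ne'
    have a := fl_dt (α := α) hε₀ d (cr e p) (cr e p) 1
    rw [← hM] at a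
    simp only [dt, hM10, ← hb, ← hh, hb0, hh0] at a
    simp only [dt, he, Matrix.cons_val] at hpe
    simp [cr, he] at a
    apply hp0
    have q0 := sq_nonneg (p 0)
    have q1 := sq_nonneg (p 1)
    ext i
    fin_cases i <;> simp
    · nlinarith
    · nlinarith
    · linarith
  intro k hk1 hk2
  obtain ⟨j, rfl⟩ : ∃ j, k = j + 1 := ⟨k - 1, by omega⟩
  obtain ⟨i1, i2⟩ := hMk j (by omega)
  have a := (arc (sg_sq hε₀ (j + 1)) hc.ne' (hdpos (j + 1) (by omega)) (hd2 (j + 1) (by omega))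
    (M (j + 1)) (hM0 j (by omega)) (hM0 (j + 1) (by omega))).1
  refine dur (hdpos (j + 1) (by omega)) (hd2 (j + 1) (by omega)) ?_
  change cos (d (j + 1) / 2) = _ * sin (d (j + 1) / 2)
  rw [i1, i2] at a
  have hsj : (-1 : ℝ) ^ j ≠ 0 := by positivity
  have a' : b * cos (d (j + 1) / 2) = -ε₀ * h * sin α * sin (d (j + 1) / 2) := by
    apply mul_left_cancel₀ hsj
    rw [pow_succ] at a
    linear_combination a
  have hq : sin (τ 1) / (cos (τ 1) + (cos α / sin α) ^ 2) = ε₀ * h * sin α / b := by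
    have e1 : cos (τ 1) + (cos α / sin α) ^ 2 =
        (cos α ^ 2 + sin α ^ 2 * cos (τ 1)) / sin α ^ 2 := by
      field_simp; ring
    rw [e1, div_div_eq_mul_div, div_eq_div_iff hden.ne' hb0]
    linear_combination (-(ε₀ * sin α)) * hrel - b * sin α ^ 2 * sin (τ 1) * hε2
  rw [hq]
  apply mul_left_cancel₀ hb0
  rw [a']
  field_simp
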